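/- arXiv:1906.04938 — 2 statements merged into one kernel-verified Lean document; each statement's English description precedes it below -/
import Mathlib

section
/- Let ψ be a viscosity solution of (E) on (0,∞) and let (a,b) ⊆ (0, n-1) be an open interval on which h > 0. Then ψ is nonincreasing on (a,b), and ψ is differentiable at every r ∈ (a,b) with ψ'(r) = r·h(r)/(r - (n-1)) ≤ 0. -/
open Set Filter Topology

/-- `ψ` is a viscosity subsolution of (E): `-((n-1)/r)·ψ'(r) - |ψ'(r)| = h(r)`
on an open set `I ⊆ (0,∞)`: for every test function `φ` differentiable on `(0,∞)`
and every `r₀ ∈ I` at which `ψ - φ` attains a local maximum, the subsolution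
inequality holds. -/
def ViscSubsolE (n : ℕ) (h : ℝ → ℝ) (I : Set ℝ) (ψ : ℝ → ℝ) : Prop :=
  ∀ φ : ℝ → ℝ, DifferentiableOn ℝ φ (Set.Ioi 0) →
    ∀ r₀ ∈ I, IsLocalMax (fun r => ψ r - φ r) r₀ →
      -(((n : ℝ) - 1) / r₀) * deriv φ r₀ - |deriv φ r₀| ≤ h r₀

/-- Viscosity supersolution of (E) on an open set `I ⊆ (0,∞)`. -/
def ViscSupersolE (n : ℕ) (h : ℝ → ℝ) (I : Set ℝ) (ψ : ℝ → ℝ) : Prop :=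
  ∀ φ : ℝ → ℝ, DifferentiableOn ℝ φ (Set.Ioi 0) →
    ∀ r₀ ∈ I, IsLocalMin (fun r => ψ r - φ r) r₀ →
      -(((n : ℝ) - 1) / r₀) * deriv φ r₀ - |deriv φ r₀| ≥ h r₀

/-- Viscosity solution of (E): both a subsolution and a supersolution. -/
def ViscSolE (n : ℕ) (h : ℝ → ℝ) (I : Set ℝ) (ψ : ℝ → ℝ) : Prop :=
  ViscSubsolE n h I ψ ∧ ViscSupersolE n h I ψ

/-! Put `g r = r h(r) / (r - (n-1))`, the solution of (E) with the absolute value resolved by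
`ψ' ≤ 0`. Where `0 ≤ h` and `0 < r < n - 1`, the two viscosity inequalities say that every slope
touching `ψ` from above at `r` is at least `g r`, and every slope touching it from below is at most
`g r`; that is, `ψ` is a viscosity solution of `ψ' = g`. A mean value inequality for touching slopes
then squeezes the difference quotients of `ψ` near `r` between bounds on the continuous function
`g`. -/

/-- The viscosity superdifferential of `u` at `x`: the slopes at `x` of differentiable functions
touching `u` from above at `x`. The test functions are differentiable on the whole line, so that
each of them is also a test function for (E). -/
def superdifferential (u : ℝ → ℝ) (x : ℝ) : Set ℝ :=
  {p | ∃ φ : ℝ → ℝ, Differentiable ℝ φ ∧ IsLocalMax (u - φ) x ∧ deriv φ x = p}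

/-- The viscosity subdifferential of `u` at `x`: the slopes at `x` of functions differentiable on
the whole line and touching `u` from below at `x`. -/
def subdifferential (u : ℝ → ℝ) (x : ℝ) : Set ℝ :=
  {p | ∃ φ : ℝ → ℝ, Differentiable ℝ φ ∧ IsLocalMin (u - φ) x ∧ deriv φ x = p}

section TouchingSlopes

variable {u g : ℝ → ℝ} {x p m : ℝ}

lemma neg_mem_subdifferential (hp : p ∈ superdifferential (-u) x) : -p ∈ subdifferential u x := by
  obtain ⟨φ, hφ, hmax, rfl⟩ := hp
  have hmin : IsLocalMin (-(-u - φ)) x := hmax.neg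
  exact ⟨-φ, hφ.neg, by rwa [neg_sub', neg_neg] at hmin, deriv.neg⟩

lemma add_deriv_mem_superdifferential {f : ℝ → ℝ} (hf : Differentiable ℝ f)
    (hp : p ∈ superdifferential (u - f) x) : p + deriv f x ∈ superdifferential u x := by
  obtain ⟨φ, hφ, hmax, rfl⟩ := hp
  exact ⟨φ + f, hφ.add hf, by rwa [add_comm, ← sub_sub], deriv_add (hφ x) (hf x)⟩

lemma exists_differentiable_pos_deriv_neg {z δ : ℝ} (hzx : z < x) (hδ : 0 < δ) (M : ℝ) :
    ∃ φ : ℝ → ℝ, Differentiable ℝ φ ∧ (∀ t, 0 < φ t) ∧ (∀ t, deriv φ t < 0) ∧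
      φ x = δ ∧ M < φ z := by
  have hgrowth : Tendsto (fun K : ℝ => δ * Real.exp (K * (x - z))) atTop atTop :=
    (Real.tendsto_exp_atTop.comp (tendsto_id.atTop_mul_const (sub_pos.2 hzx))).const_mul_atTop hδ
  obtain ⟨K, hM, hK⟩ := ((hgrowth.eventually_gt_atTop M).and (eventually_gt_atTop 0)).exists
  have hderiv (t : ℝ) : HasDerivAt (fun t => δ * Real.exp (K * (x - t)))
      (δ * (Real.exp (K * (x - t)) * (K * -1))) t :=
    (((hasDerivAt_id t).const_sub x).const_mul K).exp.const_mul δ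
  refine ⟨_, fun t => (hderiv t).differentiableAt, fun t => by positivity, fun t => ?_,
    by simp, hM⟩
  have : 0 < δ * (Real.exp (K * (x - t)) * K) := by positivity
  rw [(hderiv t).deriv]
  linarith

lemma upperSemicontinuousOn_sub {f : ℝ → ℝ} {s : Set ℝ} (hu : UpperSemicontinuousOn u s)
    (hf : ContinuousOn f s) : UpperSemicontinuousOn (u - f) s := by
  rw [sub_eq_add_neg]
  exact hu.add hf.neg.upperSemicontinuousOn

/- If `u y < u x` with `x < y`, subtract from `u` a positive decreasing function which is small at
`x` and very large at some `z < x`: the difference then has an interior maximum on `[z, y]`. -/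
theorem monotoneOn_of_superdifferential_nonneg {s : Set ℝ} (hs : IsOpen s)
    (hconn : s.OrdConnected) (hu : UpperSemicontinuousOn u s)
    (hslope : ∀ t ∈ s, ∀ p ∈ superdifferential u t, 0 ≤ p) : MonotoneOn u s := by
  intro x hx y hy hxy
  by_contra! hlt
  obtain ⟨z, hzx, hz⟩ : ∃ z < x, z ∈ s := (hs.eventually_mem hx).exists_lt
  obtain ⟨φ, hφ, hφpos, hφderiv, hφx, hφz⟩ :=
    exists_differentiable_pos_deriv_neg hzx (sub_pos.2 hlt) (u z - u y)
  have hIcc : Icc z y ⊆ s := hconn.out hz hy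
  have husc : UpperSemicontinuousOn (u - φ) (Icc z y) :=
    upperSemicontinuousOn_sub (hu.mono hIcc) hφ.continuous.continuousOn
  have hxmem : x ∈ Icc z y := ⟨hzx.le, hxy⟩
  obtain ⟨t, ht, hmax⟩ := husc.exists_isMaxOn ⟨x, hxmem⟩ isCompact_Icc
  have hut : u y ≤ u t - φ t := by
    have : u x - φ x ≤ u t - φ t := hmax hxmem
    linarith
  have htz : z ≠ t := by
    rintro rfl
    linarith
  have hty : t ≠ y := by
    rintro rfl
    linarith [hφpos t]
  have hloc : IsLocalMax (u - φ) t :=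
    hmax.isLocalMax (Icc_mem_nhds (ht.1.lt_of_ne htz) (ht.2.lt_of_ne hty))
  exact (hφderiv t).not_ge (hslope t (hIcc ht) _ ⟨φ, hφ, hloc, rfl⟩)

theorem le_slope_of_le_superdifferential {s : Set ℝ} (hs : IsOpen s) (hconn : s.OrdConnected)
    (hu : UpperSemicontinuousOn u s) (hslope : ∀ t ∈ s, ∀ p ∈ superdifferential u t, m ≤ p)
    {y : ℝ} (hx : x ∈ s) (hy : y ∈ s) (hxy : x ≠ y) : m ≤ slope u x y := by
  have hlin (t : ℝ) : HasDerivAt (fun t => m * t) m t := by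
    simpa only [id_eq, mul_one] using (hasDerivAt_id t).const_mul m
  have hdiff : Differentiable ℝ (fun t => m * t) := fun t => (hlin t).differentiableAt
  have hmono : MonotoneOn (u - fun t => m * t) s := by
    refine monotoneOn_of_superdifferential_nonneg hs hconn
      (upperSemicontinuousOn_sub hu hdiff.continuous.continuousOn) fun t ht p hp => ?_
    have := hslope t ht _ (add_deriv_mem_superdifferential hdiff hp)
    rw [(hlin t).deriv] at this
    linarith
  have hslope_sub : slope (u - fun t => m * t) x y = slope u x y - m := by
    have := sub_ne_zero.2 hxy.symm
    simp only [slope_def_field, Pi.sub_apply]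
    field_simp
    ring
  linarith [hmono.slope_nonneg hx hy]

lemma eventually_le_slope_of_le_superdifferential
    (hu : ∀ᶠ t in 𝓝 x, UpperSemicontinuousAt u t)
    (hslope : ∀ᶠ t in 𝓝 x, ∀ p ∈ superdifferential u t, m ≤ p) :
    ∀ᶠ t in 𝓝[≠] x, m ≤ slope u x t := by
  obtain ⟨a, b, hx, hab⟩ := mem_nhds_iff_exists_Ioo_subset.1 (hu.and hslope)
  filter_upwards [mem_nhdsWithin_of_mem_nhds (Ioo_mem_nhds hx.1 hx.2), self_mem_nhdsWithin]
    with t ht hne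
  exact le_slope_of_le_superdifferential isOpen_Ioo ordConnected_Ioo
    (fun t ht => (hab ht).1.upperSemicontinuousWithinAt _) (fun t ht => (hab ht).2) hx ht
    (Ne.symm hne)

lemma eventually_lt_slope_of_le_superdifferential
    (hu : ∀ᶠ t in 𝓝 x, UpperSemicontinuousAt u t) (hg : LowerSemicontinuousAt g x)
    (hslope : ∀ᶠ t in 𝓝 x, ∀ p ∈ superdifferential u t, g t ≤ p) (hm : m < g x) :
    ∀ᶠ t in 𝓝[≠] x, m < slope u x t := by
  obtain ⟨k, hmk, hk⟩ := exists_between hm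
  have hk_slope : ∀ᶠ t in 𝓝 x, ∀ p ∈ superdifferential u t, k ≤ p := by
    filter_upwards [hg k hk, hslope] with t hkt ht p hp using hkt.le.trans (ht p hp)
  exact (eventually_le_slope_of_le_superdifferential hu hk_slope).mono fun _ => hmk.trans_le

theorem hasDerivAt_of_le_superdifferential_of_subdifferential_le
    (hu : ∀ᶠ t in 𝓝 x, ContinuousAt u t) (hg : ContinuousAt g x)
    (hsuper : ∀ᶠ t in 𝓝 x, ∀ p ∈ superdifferential u t, g t ≤ p)
    (hsub : ∀ᶠ t in 𝓝 x, ∀ p ∈ subdifferential u t, p ≤ g t) :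
    HasDerivAt u (g x) x := by
  have hsuper_neg : ∀ᶠ t in 𝓝 x, ∀ p ∈ superdifferential (-u) t, (-g) t ≤ p := by
    filter_upwards [hsub] with t ht p hp
    exact neg_le.1 (ht _ (neg_mem_subdifferential hp))
  refine hasDerivAt_iff_tendsto_slope.2 (tendsto_order.2 ⟨fun m hm => ?_, fun m hm => ?_⟩)
  · exact eventually_lt_slope_of_le_superdifferential
      (hu.mono fun t ht => ht.upperSemicontinuousAt) hg.lowerSemicontinuousAt hsuper hm
  · have hneg := eventually_lt_slope_of_le_superdifferential
      (hu.mono fun t ht => ht.neg.upperSemicontinuousAt) hg.neg.lowerSemicontinuousAt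
      hsuper_neg (neg_lt_neg hm)
    filter_upwards [hneg] with t ht
    rwa [slope_neg_fun, Pi.neg_apply, Pi.neg_apply, neg_lt_neg_iff] at ht

end TouchingSlopes

section SlopeBounds

variable {k r η p : ℝ}

lemma mul_div_sub_nonpos (hr : r ∈ Ioo 0 k) (hη : 0 ≤ η) : r * η / (r - k) ≤ 0 :=
  div_nonpos_of_nonneg_of_nonpos (mul_nonneg hr.1.le hη) (sub_nonpos.2 hr.2.le)

lemma mul_neg_div_mul_add_eq (hr : r ≠ 0) : r * (-(k / r) * p + p) = p * (r - k) := by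
  field_simp
  ring

lemma mul_div_sub_le_of_sub_abs_le (hr : r ∈ Ioo 0 k) (hη : 0 ≤ η)
    (hp : -(k / r) * p - |p| ≤ η) : r * η / (r - k) ≤ p := by
  rcases le_or_gt 0 p with hp0 | hp0
  · exact (mul_div_sub_nonpos hr hη).trans hp0
  · rw [abs_of_neg hp0, sub_neg_eq_add] at hp
    rw [div_le_iff_of_neg (sub_neg.2 hr.2), ← mul_neg_div_mul_add_eq hr.1.ne']
    exact mul_le_mul_of_nonneg_left hp hr.1.le

lemma le_mul_div_sub_of_le_sub_abs (hr : r ∈ Ioo 0 k)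
    (hp : η ≤ -(k / r) * p - |p|) : p ≤ r * η / (r - k) := by
  rw [le_div_iff_of_neg (sub_neg.2 hr.2), ← mul_neg_div_mul_add_eq hr.1.ne']
  exact mul_le_mul_of_nonneg_left (by linarith [neg_le_abs p]) hr.1.le

end SlopeBounds

section Equation

variable {n : ℕ} {h ψ : ℝ → ℝ} {I : Set ℝ} {r p : ℝ}

lemma ViscSolE.mono {J : Set ℝ} (hψ : ViscSolE n h I ψ) (hJI : J ⊆ I) : ViscSolE n h J ψ :=
  ⟨fun φ hφ r hr => hψ.1 φ hφ r (hJI hr), fun φ hφ r hr => hψ.2 φ hφ r (hJI hr)⟩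

lemma ViscSubsolE.mul_div_sub_le_of_mem_superdifferential (hψ : ViscSubsolE n h I ψ) (hrI : r ∈ I)
    (hr : r ∈ Ioo 0 ((n : ℝ) - 1)) (hh : 0 ≤ h r) (hp : p ∈ superdifferential ψ r) :
    r * h r / (r - ((n : ℝ) - 1)) ≤ p := by
  obtain ⟨φ, hφ, hmax, rfl⟩ := hp
  exact mul_div_sub_le_of_sub_abs_le hr hh (hψ φ hφ.differentiableOn r hrI hmax)

lemma ViscSupersolE.le_mul_div_sub_of_mem_subdifferential (hψ : ViscSupersolE n h I ψ) (hrI : r ∈ I)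
    (hr : r ∈ Ioo 0 ((n : ℝ) - 1)) (hp : p ∈ subdifferential ψ r) :
    p ≤ r * h r / (r - ((n : ℝ) - 1)) := by
  obtain ⟨φ, hφ, hmin, rfl⟩ := hp
  exact le_mul_div_sub_of_le_sub_abs hr (hψ φ hφ.differentiableOn r hrI hmin)

theorem ViscSolE.hasDerivAt (hψ : ViscSolE n h I ψ) (hI : IsOpen I)
    (hIn : I ⊆ Ioo 0 ((n : ℝ) - 1)) (hh : ContinuousOn h I) (hnonneg : ∀ t ∈ I, 0 ≤ h t)
    (hψcont : ContinuousOn ψ I) (hr : r ∈ I) :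
    HasDerivAt ψ (r * h r / (r - ((n : ℝ) - 1))) r := by
  have hI_near : ∀ᶠ t in 𝓝 r, t ∈ I := hI.eventually_mem hr
  have hcont : ContinuousAt (fun t => t * h t / (t - ((n : ℝ) - 1))) r :=
    (continuousAt_id.mul (hh.continuousAt hI_near)).div
      (continuousAt_id.sub continuousAt_const) (sub_ne_zero.2 (hIn hr).2.ne)
  exact hasDerivAt_of_le_superdifferential_of_subdifferential_le
    (hI_near.mono fun t ht => hψcont.continuousAt (hI.mem_nhds ht)) hcont
    (hI_near.mono fun t ht _ =>
      hψ.1.mul_div_sub_le_of_mem_superdifferential ht (hIn ht) (hnonneg t ht))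
    (hI_near.mono fun t ht _ => hψ.2.le_mul_div_sub_of_mem_subdifferential ht (hIn ht))

theorem stmt_3_general (hψ : ViscSolE n h I ψ) (hI : IsOpen I) (hconn : I.OrdConnected)
    (hIn : I ⊆ Ioo 0 ((n : ℝ) - 1)) (hh : ContinuousOn h I) (hnonneg : ∀ t ∈ I, 0 ≤ h t)
    (hψcont : ContinuousOn ψ I) :
    AntitoneOn ψ I ∧ ∀ r ∈ I,
      HasDerivAt ψ (r * h r / (r - ((n : ℝ) - 1))) r ∧ r * h r / (r - ((n : ℝ) - 1)) ≤ 0 := by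
  have hderiv (r : ℝ) (hr : r ∈ I) := hψ.hasDerivAt hI hIn hh hnonneg hψcont hr
  have hnonpos (r : ℝ) (hr : r ∈ I) := mul_div_sub_nonpos (hIn hr) (hnonneg r hr)
  refine ⟨?_, fun r hr => ⟨hderiv r hr, hnonpos r hr⟩⟩
  exact antitoneOn_of_hasDerivWithinAt_nonpos hconn.convex hψcont
    (fun r hr => (hderiv r (interior_subset hr)).hasDerivWithinAt)
    fun r hr => hnonpos r (interior_subset hr)

end Equation

/-- On an interval `(a,b) ⊆ (0,n-1)` where `h > 0`, any viscosity
solution `ψ` of (E) on `(0,∞)` is nonincreasing and differentiable with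
`ψ'(r) = r·h(r)/(r-(n-1)) ≤ 0`. -/
theorem stmt_3 (n : ℕ) (hn : 2 ≤ n) (ftilde : ℝ → ℝ)
    (hfC1 : ContDiffOn ℝ 1 ftilde (Set.Ici 0))
    (hfnonneg : ∀ r ∈ Set.Ici (0 : ℝ), 0 ≤ ftilde r)
    (hfsupp : ∃ R : ℝ, 0 < R ∧ ∀ r ≥ R, ftilde r = 0)
    (c : ℝ) (hc : IsGreatest (ftilde '' Set.Ici ((n : ℝ) - 1)) c)
    (ψ : ℝ → ℝ) (hψcont : ContinuousOn ψ (Set.Ici 0))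
    (hψ : ViscSolE n (fun r => ftilde r - c) (Set.Ioi 0) ψ)
    (a b : ℝ) (hab : Set.Ioo a b ⊆ Set.Ioo 0 ((n : ℝ) - 1))
    (hpos : ∀ r ∈ Set.Ioo a b, 0 < ftilde r - c) :
    AntitoneOn ψ (Set.Ioo a b) ∧
    ∀ r ∈ Set.Ioo a b,
      HasDerivAt ψ (r * (ftilde r - c) / (r - ((n : ℝ) - 1))) r ∧
      r * (ftilde r - c) / (r - ((n : ℝ) - 1)) ≤ 0 := by
  have hpositive : Ioo a b ⊆ Ioi 0 := fun r hr => (hab hr).1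
  have hnonneg : Ioo a b ⊆ Ici 0 := hpositive.trans Ioi_subset_Ici_self
  exact stmt_3_general (hψ.mono hpositive) isOpen_Ioo ordConnected_Ioo hab
    ((hfC1.continuousOn.mono hnonneg).sub continuousOn_const) (fun r hr => (hpos r hr).le)
    (hψcont.mono hnonneg)
end

section
/- Assume c > 0. Let ψ₁, ψ₂ : [0,∞) → ℝ be continuous viscosity solutions of (E) on (0,∞) which are bounded from above, and assume ψ₁ = ψ₂ on the uniqueness set Ã. Then ψ₁ = ψ₂ on [0,∞). -/
open Set Filter Topology

/-!
With `N = n - 1`, the Hamiltonian `-(N / r) * p - |p|` is the minimum of `-(1 + N / r) * p` and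
`(1 - N / r) * p`. For `r > N` these are linear functions of opposite monotonicity with roots
`lowerSlope ≤ upperSlope`: slopes of a supersolution `v` lie in `[lowerSlope, upperSlope]`, while
slopes of a subsolution `u` avoid `(lowerSlope, upperSlope)`. So, on an interval `[a, b]` where
`h < 0`, the value `u r` cannot exceed both `u a + ∫ s in a..r, lowerSlope N h s` and
`u b - ∫ s in r..b, upperSlope N h s`.

Suppose `v r < u r`. Take `a` just after the last zero of `h` before `r`, where `u ≤ v`; if there is
no such zero, take `a` near `N`, where the integral of `lowerSlope` diverges to `-∞`. Take `b` to be
the first zero of `h` after `r`; if there is none, the integral of `upperSlope` diverges to `∞` and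
the upper bound on `u` is violated for large `b`. Either way `u r` exceeds both quantities.

For `r < N` the Hamiltonian is strictly decreasing in `p`, so slopes of `v` lie below its root at
height `h r` and slopes of `u` above it. Hence `u - v` is nondecreasing there, which carries `u ≤ v`
from `N` down to `0`.
-/

/-- `p` is the slope at `r` of a function touching `u` from above there, that is, an element of the
superdifferential of `u`. Touching functions are differentiable on all of `ℝ`, so that they are
admissible in `ViscSubsolE`; slopes of functions touching `u` from below are the `-p` with
`IsSuperslope (-u) r p`. -/
def IsSuperslope (u : ℝ → ℝ) (r p : ℝ) : Prop :=
  ∃ φ : ℝ → ℝ, Differentiable ℝ φ ∧ deriv φ r = p ∧ IsLocalMax (fun s => u s - φ s) r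

section Superslope

variable {u A B Q q : ℝ → ℝ} {a b r p x : ℝ}

lemma IsSuperslope.of_sub (hQ : Differentiable ℝ Q) (hp : IsSuperslope (u - Q) r p) :
    IsSuperslope u r (deriv Q r + p) := by
  obtain ⟨φ, hφ, rfl, hmax⟩ := hp
  refine ⟨Q + φ, hQ.add hφ, deriv_add (hQ r) (hφ r), ?_⟩
  simpa only [Pi.add_apply, Pi.sub_apply, sub_sub] using hmax

lemma IsSuperslope.of_comp_neg (hp : IsSuperslope (fun s => u (-s)) r p) :
    IsSuperslope u (-r) (-p) := by
  obtain ⟨φ, hφ, rfl, hmax⟩ := hp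
  refine ⟨fun s => φ (-s), hφ.comp differentiable_neg, by simp [deriv_comp_neg], ?_⟩
  have hneg : Tendsto (fun s : ℝ => -s) (𝓝 (-r)) (𝓝 r) := by
    simpa using continuous_neg.tendsto (-r)
  filter_upwards [hneg.eventually hmax] with s hs
  simpa using hs

-- The soft maximum `ε log (exp (A / ε) + exp (B / ε))` with a small `ε`.
lemma exists_differentiable_gt_of_max_lt {t : ℝ} (hA : Differentiable ℝ A) (hB : Differentiable ℝ B)
    (hAx : A x < t) (hBx : B x < t) :
    ∃ S : ℝ → ℝ, Differentiable ℝ S ∧ (∀ s, A s < S s) ∧ (∀ s, B s < S s) ∧ S x < t ∧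
      ∀ s, deriv S s ∈ openSegment ℝ (deriv A s) (deriv B s) := by
  obtain ⟨ε, hε, hAε, hBε⟩ : ∃ ε > 0, A x ≤ t - ε ∧ B x ≤ t - ε :=
    ⟨min (t - A x) (t - B x), lt_min (by linarith) (by linarith),
      by linarith [min_le_left (t - A x) (t - B x)], by linarith [min_le_right (t - A x) (t - B x)]⟩
  set α : ℝ → ℝ := fun s => Real.exp (A s / ε)
  set β : ℝ → ℝ := fun s => Real.exp (B s / ε)
  have hα : ∀ s, 0 < α s := fun s => Real.exp_pos _
  have hβ : ∀ s, 0 < β s := fun s => Real.exp_pos _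
  have hderiv : ∀ s, HasDerivAt (fun s => ε * Real.log (α s + β s))
      (α s / (α s + β s) * deriv A s + β s / (α s + β s) * deriv B s) s := fun s => by
    have hsum : α s + β s ≠ 0 := (add_pos (hα s) (hβ s)).ne'
    refine (((((hA s).hasDerivAt.div_const ε).exp.add
      ((hB s).hasDerivAt.div_const ε).exp).log hsum).const_mul ε).congr_deriv ?_
    change ε * ((α s * _ + β s * _) / (α s + β s)) = _
    field_simp
  refine ⟨_, fun s => (hderiv s).differentiableAt, fun s => ?_, fun s => ?_, ?_, fun s => ?_⟩
  · rw [← div_lt_iff₀' hε, Real.lt_log_iff_exp_lt (add_pos (hα s) (hβ s))]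
    exact lt_add_of_pos_right _ (hβ s)
  · rw [← div_lt_iff₀' hε, Real.lt_log_iff_exp_lt (add_pos (hα s) (hβ s))]
    exact lt_add_of_pos_left _ (hα s)
  · rw [← lt_div_iff₀' hε, Real.log_lt_iff_lt_exp (add_pos (hα x) (hβ x))]
    have hexp : Real.exp (t / ε) = Real.exp 1 * Real.exp ((t - ε) / ε) := by
      rw [← Real.exp_add]
      congr 1
      field_simp
      ring
    have hαx : α x ≤ Real.exp ((t - ε) / ε) := by simp only [α]; gcongr
    have hβx : β x ≤ Real.exp ((t - ε) / ε) := by simp only [β]; gcongr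
    nlinarith [Real.exp_one_gt_d9, Real.exp_pos ((t - ε) / ε)]
  · have hsum : 0 < α s + β s := add_pos (hα s) (hβ s)
    rw [(hderiv s).deriv]
    exact ⟨_, _, div_pos (hα s) hsum, div_pos (hβ s) hsum, by field_simp, rfl⟩

lemma exists_isSuperslope_mem_openSegment (hu : ContinuousOn u (Icc a b))
    (hA : Differentiable ℝ A) (hB : Differentiable ℝ B) (ha : u a ≤ A a) (hb : u b ≤ B b)
    (hx : x ∈ Icc a b) (hAx : A x < u x) (hBx : B x < u x) :
    ∃ r ∈ Ioo a b, ∃ p ∈ openSegment ℝ (deriv A r) (deriv B r), IsSuperslope u r p := by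
  obtain ⟨S, hS, hAS, hBS, hSx, hderiv⟩ := exists_differentiable_gt_of_max_lt hA hB hAx hBx
  have hends : ∀ s ∈ Icc a b \ Ioo a b, u s - S s < u x - S x := by
    intro s hs
    rw [Icc_sdiff_Ioo_same (hx.1.trans hx.2)] at hs
    rcases hs with rfl | rfl
    · linarith [hAS s]
    · linarith [hBS s]
  obtain ⟨r, hr, hmax⟩ := isCompact_Icc.exists_isLocalMax_mem_open Ioo_subset_Icc_self
    (hu.sub hS.continuous.continuousOn) hx hends isOpen_Ioo
  exact ⟨r, hr, deriv S r, hderiv r, S, hS, rfl, hmax⟩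

lemma le_of_forall_isSuperslope_nonneg (hab : a ≤ b) (hu : ContinuousOn u (Icc a b))
    (hp : ∀ r ∈ Ioo a b, ∀ p, IsSuperslope u r p → 0 ≤ p) : u a ≤ u b := by
  by_contra! hlt
  have hab : a < b := hab.lt_of_ne (by rintro rfl; exact hlt.false)
  obtain ⟨z, hzu, hz⟩ : ∃ z, u b < u z ∧ z ∈ Ioo a b := by
    have := left_nhdsWithin_Ioo_neBot hab
    have hlim := (hu a (left_mem_Icc.2 hab.le)).mono Ioo_subset_Icc_self
    exact ((hlim.eventually_const_lt hlt).and self_mem_nhdsWithin).exists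
  -- A steep line through `(a, u a)` and the level `u b` both pass below `(z, u z)`.
  set K := (|u a - u z| + 1) / (z - a)
  have hza : 0 < z - a := sub_pos.2 hz.1
  have hK : 0 < K := by positivity
  have hline : ∀ s, HasDerivAt (fun s => u a - K * (s - a)) (-K) s := fun s => by
    simpa using (((hasDerivAt_id s).sub_const a).const_mul K).const_sub (u a)
  obtain ⟨r, hr, p, hpK, hpr⟩ := exists_isSuperslope_mem_openSegment (x := z) hu
    (fun s => (hline s).differentiableAt) (differentiable_const (u b)) (by simp) le_rfl
    (Ioo_subset_Icc_self hz)
    (by rw [div_mul_cancel₀ _ hza.ne']; linarith [le_abs_self (u a - u z)]) hzu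
  rw [(hline r).deriv, deriv_const, openSegment_eq_Ioo (neg_lt_zero.2 hK)] at hpK
  exact (hp r hr p hpr).not_gt hpK.2

lemma le_of_forall_isSuperslope_nonpos (hab : a ≤ b) (hu : ContinuousOn u (Icc a b))
    (hp : ∀ r ∈ Ioo a b, ∀ p, IsSuperslope u r p → p ≤ 0) : u b ≤ u a := by
  have hmaps : MapsTo (fun s => -s) (Icc (-b) (-a)) (Icc a b) := fun s hs =>
    ⟨le_neg_of_le_neg hs.2, neg_le_of_neg_le hs.1⟩
  have hle := le_of_forall_isSuperslope_nonneg (u := fun s => u (-s)) (neg_le_neg hab)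
    (hu.comp continuousOn_neg hmaps) fun r hr p hpr => neg_nonpos.1 <|
      hp (-r) ⟨lt_neg_of_lt_neg hr.2, neg_lt_of_neg_lt hr.1⟩ (-p) hpr.of_comp_neg
  simpa using hle

lemma exists_primitive_Icc (hab : a ≤ b) (hq : ContinuousOn q (Icc a b)) :
    ∃ Q : ℝ → ℝ, Differentiable ℝ Q ∧ (∀ s ∈ Icc a b, deriv Q s = q s) ∧
      ∀ x ∈ Icc a b, ∀ y ∈ Icc a b, ∫ s in x..y, q s = Q y - Q x := by
  have hcont : Continuous (IccExtend hab ((Icc a b).domRestrict q)) := hq.domRestrict.Icc_extend'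
  set Q : ℝ → ℝ := fun x => ∫ s in a..x, IccExtend hab ((Icc a b).domRestrict q) s
  have hQ : ∀ s, HasDerivAt Q (IccExtend hab ((Icc a b).domRestrict q) s) s := fun s =>
    (hcont.integral_hasStrictDerivAt a s).hasDerivAt
  have hQ' : ∀ s ∈ Icc a b, HasDerivAt Q (q s) s := fun s hs =>
    (hQ s).congr_deriv (IccExtend_of_mem _ _ hs)
  refine ⟨Q, fun s => (hQ s).differentiableAt, fun s hs => (hQ' s hs).deriv, fun x hx y hy => ?_⟩
  have hsub : uIcc x y ⊆ Icc a b := uIcc_subset_Icc hx hy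
  exact intervalIntegral.integral_eq_sub_of_hasDerivAt (fun s hs => hQ' s (hsub hs))
    (hq.mono hsub).intervalIntegrable

lemma sub_le_integral_of_isSuperslope_le (hab : a ≤ b) (hu : ContinuousOn u (Icc a b))
    (hq : ContinuousOn q (Icc a b)) (hp : ∀ r ∈ Ioo a b, ∀ p, IsSuperslope u r p → p ≤ q r) :
    u b - u a ≤ ∫ s in a..b, q s := by
  obtain ⟨Q, hQ, hQq, hint⟩ := exists_primitive_Icc hab hq
  have hle := le_of_forall_isSuperslope_nonpos hab (hu.sub hQ.continuous.continuousOn)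
    fun r hr p hpr => by
      have := hp r hr _ (hpr.of_sub hQ)
      rw [hQq r (Ioo_subset_Icc_self hr)] at this
      linarith
  rw [hint a (left_mem_Icc.2 hab) b (right_mem_Icc.2 hab)]
  simp only [Pi.sub_apply] at hle
  linarith

lemma integral_le_sub_of_le_isSuperslope (hab : a ≤ b) (hu : ContinuousOn u (Icc a b))
    (hq : ContinuousOn q (Icc a b)) (hp : ∀ r ∈ Ioo a b, ∀ p, IsSuperslope u r p → q r ≤ p) :
    ∫ s in a..b, q s ≤ u b - u a := by
  obtain ⟨Q, hQ, hQq, hint⟩ := exists_primitive_Icc hab hq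
  have hle := le_of_forall_isSuperslope_nonneg hab (hu.sub hQ.continuous.continuousOn)
    fun r hr p hpr => by
      have := hp r hr _ (hpr.of_sub hQ)
      rw [hQq r (Ioo_subset_Icc_self hr)] at this
      linarith
  rw [hint a (left_mem_Icc.2 hab) b (right_mem_Icc.2 hab)]
  simp only [Pi.sub_apply] at hle
  linarith

-- A function whose superslopes avoid `(q₁, q₂)` can only descend along `q₁` and later climb
-- along `q₂`: switching in the opposite order would create a concave kink.
lemma le_add_integral_or_le_sub_integral {q₁ q₂ : ℝ → ℝ} (hu : ContinuousOn u (Icc a b))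
    (hq₁ : ContinuousOn q₁ (Icc a b)) (hq₂ : ContinuousOn q₂ (Icc a b))
    (hlt : ∀ r ∈ Ioo a b, q₁ r < q₂ r)
    (hp : ∀ r ∈ Ioo a b, ∀ p, IsSuperslope u r p → p ≤ q₁ r ∨ q₂ r ≤ p) (hx : x ∈ Icc a b) :
    u x ≤ u a + ∫ s in a..x, q₁ s ∨ u x ≤ u b - ∫ s in x..b, q₂ s := by
  have hab : a ≤ b := hx.1.trans hx.2
  obtain ⟨A, hA, hAq, hAint⟩ := exists_primitive_Icc hab hq₁
  obtain ⟨B, hB, hBq, hBint⟩ := exists_primitive_Icc hab hq₂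
  rw [hAint a (left_mem_Icc.2 hab) x hx, hBint x hx b (right_mem_Icc.2 hab)]
  by_contra! hux
  obtain ⟨r, hr, p, hpAB, hpr⟩ := exists_isSuperslope_mem_openSegment hu
    (hA.add_const (u a - A a)) (hB.add_const (u b - B b)) (by simp) (by simp) hx
    (by linarith [hux.1]) (by linarith [hux.2])
  have hr' := Ioo_subset_Icc_self hr
  rw [deriv_add_const, deriv_add_const, hAq r hr', hBq r hr', openSegment_eq_Ioo (hlt r hr)] at hpAB
  rcases hp r hr p hpr with h | h
  · exact h.not_gt hpAB.1
  · exact h.not_gt hpAB.2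

end Superslope

/-- The root `p` of `(1 - N / s) * p = h s`: for `h s < 0`, the negative slope allowed by (E)
when `s > N = n - 1`. At `s = N` the division by zero gives the junk value `0`. -/
noncomputable def lowerSlope (N : ℝ) (h : ℝ → ℝ) (s : ℝ) : ℝ := h s / (1 - N / s)

/-- The root `p` of `-(1 + N / s) * p = h s`: for `h s < 0`, the positive slope allowed by (E),
where `N = n - 1`. -/
noncomputable def upperSlope (N : ℝ) (h : ℝ → ℝ) (s : ℝ) : ℝ := -h s / (1 + N / s)

section Slopes

variable {N : ℝ} {h : ℝ → ℝ} {s p r : ℝ}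

lemma hamiltonian_eq_min (κ p : ℝ) : -κ * p - |p| = min (-(1 + κ) * p) ((1 - κ) * p) := by
  rw [abs_eq_max_neg, ← min_sub_sub_left]
  ring_nf

lemma le_upperSlope_iff (hN : 0 < N) (hs : 0 < s) :
    p ≤ upperSlope N h s ↔ h s ≤ -(1 + N / s) * p := by
  rw [upperSlope, le_div_iff₀ (by positivity), le_neg, ← neg_mul, mul_comm]
  ring_nf

lemma upperSlope_le_iff (hN : 0 < N) (hs : 0 < s) :
    upperSlope N h s ≤ p ↔ -(1 + N / s) * p ≤ h s := by
  rw [upperSlope, div_le_iff₀ (by positivity), neg_le, mul_comm, neg_mul]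

lemma le_hamiltonian_iff (hN : 0 < N) (hs : N < s) :
    h s ≤ -(N / s) * p - |p| ↔ lowerSlope N h s ≤ p ∧ p ≤ upperSlope N h s := by
  have hκ : 0 < 1 - N / s := sub_pos.2 ((div_lt_one (hN.trans hs)).2 hs)
  rw [hamiltonian_eq_min, le_min_iff, le_upperSlope_iff hN (hN.trans hs), lowerSlope,
    div_le_iff₀' hκ, and_comm]

lemma hamiltonian_le_iff (hN : 0 < N) (hs : N < s) :
    -(N / s) * p - |p| ≤ h s ↔ p ≤ lowerSlope N h s ∨ upperSlope N h s ≤ p := by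
  have hκ : 0 < 1 - N / s := sub_pos.2 ((div_lt_one (hN.trans hs)).2 hs)
  rw [hamiltonian_eq_min, min_le_iff, upperSlope_le_iff hN (hN.trans hs), lowerSlope,
    le_div_iff₀' hκ, or_comm]

lemma le_hamiltonian_iff_of_lt (hs₀ : 0 < s) (hs : s < N) :
    h s ≤ -(N / s) * p - |p| ↔ p ≤ min (lowerSlope N h s) (upperSlope N h s) := by
  have hκ : 1 - N / s < 0 := sub_neg.2 ((one_lt_div hs₀).2 hs)
  rw [hamiltonian_eq_min, le_min_iff, le_min_iff, le_upperSlope_iff (hs₀.trans hs) hs₀, lowerSlope,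
    le_div_iff_of_neg' hκ, and_comm]

lemma hamiltonian_le_iff_of_lt (hs₀ : 0 < s) (hs : s < N) :
    -(N / s) * p - |p| ≤ h s ↔ min (lowerSlope N h s) (upperSlope N h s) ≤ p := by
  have hκ : 1 - N / s < 0 := sub_neg.2 ((one_lt_div hs₀).2 hs)
  rw [hamiltonian_eq_min, min_le_iff, min_le_iff, upperSlope_le_iff (hs₀.trans hs) hs₀, lowerSlope,
    div_le_iff_of_neg' hκ, or_comm]

lemma continuousOn_upperSlope (hN : 0 < N) (hh : ContinuousOn h (Ioi 0)) :
    ContinuousOn (upperSlope N h) (Ioi 0) := by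
  refine hh.neg.div (continuousOn_const.add (continuousOn_const.div continuousOn_id
    fun s hs => ne_of_gt hs)) fun s (hs : 0 < s) => ?_
  positivity

lemma continuousOn_lowerSlope (hh : ContinuousOn h (Ioi 0)) :
    ContinuousOn (lowerSlope N h) (Ioi 0 \ {N}) := by
  refine (hh.mono sdiff_subset).div (continuousOn_const.sub (continuousOn_const.div
    continuousOn_id fun s hs => ne_of_gt hs.1)) fun s hs hzero => hs.2 ?_
  rwa [sub_eq_zero, eq_comm, div_eq_one_iff_eq (ne_of_gt hs.1), eq_comm] at hzero

lemma continuousOn_lowerSlope_Ioi (hN : 0 < N) (hh : ContinuousOn h (Ioi 0)) :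
    ContinuousOn (lowerSlope N h) (Ioi N) :=
  (continuousOn_lowerSlope hh).mono fun _ hs => ⟨hN.trans hs, ne_of_gt hs⟩

lemma lowerSlope_lt_upperSlope (hN : 0 < N) (hs : N < s) (hneg : h s < 0) :
    lowerSlope N h s < upperSlope N h s := by
  have hs₀ : 0 < s := hN.trans hs
  have hκ : 0 < 1 - N / s := sub_pos.2 ((div_lt_one hs₀).2 hs)
  exact (div_neg_of_neg_of_pos hneg hκ).trans (div_pos (neg_pos.2 hneg) (by positivity))

lemma lowerSlope_le_of_le_neg {m : ℝ} (hN : 0 < N) (hs : N < s) (hm : 0 < m) (hle : h s ≤ -m) :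
    lowerSlope N h s ≤ -(m * N) * (s - N)⁻¹ := by
  have hs₀ : 0 < s := hN.trans hs
  have hsN : 0 < s - N := sub_pos.2 hs
  have heq : lowerSlope N h s = h s * s * (s - N)⁻¹ := by
    rw [lowerSlope, one_sub_div hs₀.ne', div_div_eq_mul_div, div_eq_mul_inv]
  rw [heq]
  refine mul_le_mul_of_nonneg_right ?_ (inv_pos.2 hsN).le
  nlinarith

lemma half_le_upperSlope {δ : ℝ} (hN : 0 < N) (hs : N < s) (hδ : 0 ≤ δ) (hle : h s ≤ -δ) :
    δ / 2 ≤ upperSlope N h s := by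
  have hs₀ : 0 < s := hN.trans hs
  have hκ : N / s ≤ 1 := (div_le_one hs₀).2 hs.le
  rw [le_upperSlope_iff hN hs₀]
  nlinarith

lemma exists_forall_le_neg_of_isCompact {K : Set ℝ} (hK : IsCompact K) (hh : ContinuousOn h K)
    (hneg : ∀ s ∈ K, h s < 0) : ∃ m > 0, ∀ s ∈ K, h s ≤ -m := by
  rcases K.eq_empty_or_nonempty with rfl | hne
  · exact ⟨1, one_pos, by simp⟩
  · obtain ⟨z, hz, hmax⟩ := hK.exists_isMaxOn hne hh
    exact ⟨-h z, neg_pos.2 (hneg z hz), fun s hs => by simpa using hmax hs⟩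

lemma tendsto_integral_lowerSlope_atBot (hN : 0 < N) (hh : ContinuousOn h (Ioi 0)) (hr : N < r)
    (hneg : ∀ s ∈ Icc N r, h s < 0) :
    Tendsto (fun a => ∫ s in a..r, lowerSlope N h s) (𝓝[>] N) atBot := by
  obtain ⟨m, hm, hle⟩ := exists_forall_le_neg_of_isCompact isCompact_Icc
    (hh.mono fun s hs => hN.trans_le hs.1) hneg
  have hbound : ∀ a ∈ Ioo N r, ∫ s in a..r, lowerSlope N h s ≤
      m * N * (Real.log (a - N) - Real.log (r - N)) := fun a ha => by
    have hIcc : uIcc a r ⊆ Ioi N := by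
      rw [uIcc_of_le ha.2.le]
      exact fun s hs => ha.1.trans_le hs.1
    have hinv : ContinuousOn (fun s => -(m * N) * (s - N)⁻¹) (uIcc a r) := by
      refine continuousOn_const.mul ((continuousOn_id.sub continuousOn_const).inv₀ fun s hs => ?_)
      exact (sub_pos.2 (hIcc hs)).ne'
    calc ∫ s in a..r, lowerSlope N h s
        ≤ ∫ s in a..r, -(m * N) * (s - N)⁻¹ :=
          intervalIntegral.integral_mono_on ha.2.le
            ((continuousOn_lowerSlope_Ioi hN hh).mono hIcc).intervalIntegrable
            hinv.intervalIntegrable fun s hs => lowerSlope_le_of_le_neg hN (ha.1.trans_le hs.1) hm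
              (hle s ⟨ha.1.le.trans hs.1, hs.2⟩)
      _ = m * N * (Real.log (a - N) - Real.log (r - N)) := by
          rw [intervalIntegral.integral_const_mul,
            intervalIntegral.integral_comp_sub_right (fun s => s⁻¹) N,
            integral_inv_of_pos (sub_pos.2 ha.1) (sub_pos.2 hr),
            Real.log_div (sub_pos.2 hr).ne' (sub_pos.2 ha.1).ne']
          ring
  have hlog : Tendsto (fun a => Real.log (a - N)) (𝓝[>] N) atBot := by
    refine Real.tendsto_log_nhdsGT_zero.comp (tendsto_nhdsWithin_iff.2 ⟨?_, ?_⟩)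
    · simpa using ((continuous_sub_right N).tendsto N).mono_left nhdsWithin_le_nhds
    · exact eventually_mem_nhdsWithin.mono fun a ha => mem_Ioi.2 (sub_pos.2 ha)
  refine tendsto_atBot_mono' _ ?_
    ((tendsto_atBot_add_const_right _ (-Real.log (r - N)) hlog).const_mul_atBot (mul_pos hm hN))
  filter_upwards [Ioo_mem_nhdsGT hr] with a ha using hbound a ha

lemma tendsto_integral_upperSlope_atTop (hN : 0 < N) (hh : ContinuousOn h (Ioi 0)) (hr : N < r)
    (hnonpos : ∀ s ≥ r, h s ≤ 0) (hinf : ∃ δ > 0, ∀ᶠ s in atTop, h s ≤ -δ) :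
    Tendsto (fun b => ∫ s in r..b, upperSlope N h s) atTop atTop := by
  obtain ⟨δ, hδ, hev⟩ := hinf
  obtain ⟨R, hR⟩ := ((eventually_ge_atTop r).and hev).exists_forall_of_atTop
  have hrR : r ≤ R := (hR R le_rfl).1
  have hint : ∀ x ≥ r, ∀ y ≥ r, IntervalIntegrable (upperSlope N h) MeasureTheory.volume x y :=
    fun x hx y hy => ((continuousOn_upperSlope hN hh).mono fun s hs =>
      (hN.trans hr).trans_le ((le_min hx hy).trans hs.1)).intervalIntegrable
  have hbound : ∀ b ≥ R, δ / 2 * (b - R) ≤ ∫ s in r..b, upperSlope N h s := fun b hb => by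
    have hfirst : 0 ≤ ∫ s in r..R, upperSlope N h s :=
      intervalIntegral.integral_nonneg hrR fun s hs => by
        simpa using half_le_upperSlope hN (hr.trans_le hs.1) le_rfl (by simpa using hnonpos s hs.1)
    have hsecond : ∫ _ in R..b, δ / 2 ≤ ∫ s in R..b, upperSlope N h s :=
      intervalIntegral.integral_mono_on hb intervalIntegrable_const
        (hint R hrR b (hrR.trans hb)) fun s hs =>
          half_le_upperSlope hN (hr.trans_le (hrR.trans hs.1)) hδ.le (hR s hs.1).2
    rw [intervalIntegral.integral_const, smul_eq_mul] at hsecond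
    rw [← intervalIntegral.integral_add_adjacent_intervals (hint r le_rfl R hrR)
      (hint R hrR b (hrR.trans hb))]
    linarith
  refine tendsto_atTop_mono' _ ((eventually_ge_atTop R).mono hbound) ?_
  exact (tendsto_atTop_add_const_right _ (-R) tendsto_id).const_mul_atTop (half_pos hδ)

end Slopes

section Comparison

variable {n : ℕ} {h u v : ℝ → ℝ} {a b r x p : ℝ}

lemma ViscSubsolE.hamiltonian_le {I : Set ℝ} (hu : ViscSubsolE n h I u) (hr : r ∈ I)
    (hp : IsSuperslope u r p) : -(((n : ℝ) - 1) / r) * p - |p| ≤ h r := by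
  obtain ⟨φ, hφ, rfl, hmax⟩ := hp
  exact hu φ hφ.differentiableOn r hr hmax

lemma ViscSupersolE.le_hamiltonian {I : Set ℝ} (hv : ViscSupersolE n h I v) (hr : r ∈ I)
    (hp : IsSuperslope (-v) r p) : h r ≤ -(((n : ℝ) - 1) / r) * -p - |-p| := by
  obtain ⟨φ, hφ, rfl, hmax⟩ := hp
  have hmin : IsLocalMin (fun s => v s - (-φ) s) r := by
    simpa [add_comm, sub_eq_add_neg] using hmax.neg
  simpa only [deriv.neg] using hv (-φ) hφ.neg.differentiableOn r hr hmin

lemma ViscSupersolE.sub_le_integral (hv : ViscSupersolE n h (Ioi 0) v)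
    (hvc : ContinuousOn v (Ioi 0)) {q : ℝ → ℝ} (ha : 0 < a) (hab : a ≤ b)
    (hq : ContinuousOn q (Icc a b))
    (hle : ∀ s ∈ Ioo a b, ∀ p, h s ≤ -(((n : ℝ) - 1) / s) * p - |p| → p ≤ q s) :
    v b - v a ≤ ∫ s in a..b, q s := by
  have hbound := integral_le_sub_of_le_isSuperslope (u := -v) (q := -q) hab
    (hvc.mono fun s hs => ha.trans_le hs.1).neg hq.neg fun s hs p hp =>
      neg_le.1 (hle s hs (-p) (hv.le_hamiltonian (ha.trans hs.1) hp))
  simp only [Pi.neg_apply, intervalIntegral.integral_neg] at hbound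
  linarith

lemma ViscSupersolE.integral_lowerSlope_le_sub (hn : 1 < n) (hh : ContinuousOn h (Ioi 0))
    (hv : ViscSupersolE n h (Ioi 0) v) (hvc : ContinuousOn v (Ioi 0)) (ha : (n : ℝ) - 1 < a)
    (hab : a ≤ b) : ∫ s in a..b, lowerSlope (n - 1) h s ≤ v b - v a := by
  have hN : 0 < (n : ℝ) - 1 := sub_pos.2 (Nat.one_lt_cast.2 hn)
  have hbound := sub_le_integral_of_isSuperslope_le (u := -v) (q := -lowerSlope (n - 1) h) hab
    (hvc.mono fun s hs => (hN.trans ha).trans_le hs.1).neg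
    ((continuousOn_lowerSlope_Ioi hN hh).mono fun s hs => ha.trans_le hs.1).neg fun s hs p hp =>
      le_neg.1 ((le_hamiltonian_iff hN (ha.trans hs.1)).1
        (hv.le_hamiltonian ((hN.trans ha).trans hs.1) hp)).1
  simp only [Pi.neg_apply, intervalIntegral.integral_neg] at hbound
  linarith

lemma ViscSupersolE.sub_le_integral_upperSlope (hn : 1 < n) (hh : ContinuousOn h (Ioi 0))
    (hv : ViscSupersolE n h (Ioi 0) v) (hvc : ContinuousOn v (Ioi 0)) (ha : (n : ℝ) - 1 < a)
    (hab : a ≤ b) : v b - v a ≤ ∫ s in a..b, upperSlope (n - 1) h s := by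
  have hN : 0 < (n : ℝ) - 1 := sub_pos.2 (Nat.one_lt_cast.2 hn)
  exact hv.sub_le_integral hvc (hN.trans ha) hab
    ((continuousOn_upperSlope hN hh).mono fun s hs => (hN.trans ha).trans_le hs.1)
    fun s hs p hp => ((le_hamiltonian_iff hN (ha.trans hs.1)).1 hp).2

lemma ViscSubsolE.le_add_integral_or_le_sub_integral (hn : 1 < n) (hh : ContinuousOn h (Ioi 0))
    (hu : ViscSubsolE n h (Ioi 0) u) (huc : ContinuousOn u (Ioi 0)) (ha : (n : ℝ) - 1 < a)
    (hneg : ∀ s ∈ Ioo a b, h s < 0) (hx : x ∈ Icc a b) :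
    u x ≤ u a + ∫ s in a..x, lowerSlope (n - 1) h s ∨
      u x ≤ u b - ∫ s in x..b, upperSlope (n - 1) h s := by
  have hN : 0 < (n : ℝ) - 1 := sub_pos.2 (Nat.one_lt_cast.2 hn)
  have hpos : Icc a b ⊆ Ioi 0 := fun s hs => (hN.trans ha).trans_le hs.1
  exact _root_.le_add_integral_or_le_sub_integral (huc.mono hpos)
    ((continuousOn_lowerSlope_Ioi hN hh).mono fun s hs => ha.trans_le hs.1)
    ((continuousOn_upperSlope hN hh).mono hpos)
    (fun s hs => lowerSlope_lt_upperSlope hN (ha.trans hs.1) (hneg s hs))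
    (fun s hs p hp => (hamiltonian_le_iff hN (ha.trans hs.1)).1
      (hu.hamiltonian_le ((hN.trans ha).trans hs.1) hp)) hx

lemma isClosed_Ici_inter_zeros {N : ℝ} (hN : 0 < N) (hh : ContinuousOn h (Ioi 0)) :
    IsClosed (Ici N ∩ h ⁻¹' {0}) :=
  (hh.mono fun _ hs => hN.trans_le hs).preimage_isClosed_of_isClosed isClosed_Ici
    isClosed_singleton

lemma exists_add_integral_lowerSlope_lt (hn : 1 < n) (hh : ContinuousOn h (Ioi 0))
    (hnonpos : ∀ s ≥ (n : ℝ) - 1, h s ≤ 0) (hv : ViscSupersolE n h (Ioi 0) v)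
    (huc : ContinuousOn u (Ioi 0)) (hvc : ContinuousOn v (Ioi 0))
    (hle : ∀ s ≥ (n : ℝ) - 1, h s = 0 → u s ≤ v s) (hr : (n : ℝ) - 1 < r) (hlt : v r < u r) :
    ∃ a ∈ Ioo ((n : ℝ) - 1) r, (∀ s ∈ Ioo a r, h s < 0) ∧
      u a + ∫ s in a..r, lowerSlope (n - 1) h s < u r := by
  have hN : 0 < (n : ℝ) - 1 := sub_pos.2 (Nat.one_lt_cast.2 hn)
  set Z : Set ℝ := (Ici ((n : ℝ) - 1) ∩ h ⁻¹' {0}) ∩ Iic r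
  have hneg : ∀ s ≥ (n : ℝ) - 1, s ≤ r → s ∉ Z → h s < 0 := fun s hs hsr hsZ =>
    (hnonpos s hs).lt_of_ne fun hzero => hsZ ⟨⟨hs, hzero⟩, hsr⟩
  rcases Z.eq_empty_or_nonempty with hZ | hZ
  · have hlim : Tendsto u (𝓝[>] ((n : ℝ) - 1)) (𝓝 (u ((n : ℝ) - 1))) :=
      (huc _ hN).mono fun s hs => hN.trans hs
    have hint := tendsto_integral_lowerSlope_atBot hN hh hr fun s hs =>
      hneg s hs.1 hs.2 (hZ ▸ notMem_empty s)
    have hbot := hlim.add_atBot hint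
    obtain ⟨a, hau, ha⟩ := ((hbot.eventually_lt_atBot (u r)).and (Ioo_mem_nhdsGT hr)).exists
    exact ⟨a, ha, fun s hs => hneg s (ha.1.trans hs.1).le hs.2.le (hZ ▸ notMem_empty s), hau⟩
  · obtain ⟨⟨⟨hz, hz₀⟩, hzr⟩, hmax⟩ := ((isClosed_Ici_inter_zeros hN hh).inter
      isClosed_Iic).isGreatest_csSup hZ ⟨r, fun s hs => hs.2⟩
    set z := sSup Z
    have huz : u z - v z < u r - v r := by linarith [hle z hz hz₀]
    have hzr : z < r := lt_of_le_of_ne hzr fun heq => by rw [heq] at huz; exact huz.false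
    have hlim : Tendsto (u - v) (𝓝[>] z) (𝓝 (u z - v z)) :=
      ((huc.sub hvc) z (hN.trans_le hz)).mono fun s hs => (hN.trans_le hz).trans hs
    obtain ⟨a, hauv, ha⟩ := ((hlim.eventually_lt_const huz).and (Ioo_mem_nhdsGT hzr)).exists
    have hNa : (n : ℝ) - 1 < a := hz.trans_lt ha.1
    refine ⟨a, ⟨hNa, ha.2⟩, fun s hs => hneg s (hNa.trans hs.1).le hs.2.le fun hsZ =>
      (hmax hsZ).not_gt (ha.1.trans hs.1), ?_⟩
    simp only [Pi.sub_apply] at hauv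
    linarith [hv.integral_lowerSlope_le_sub hn hh hvc hNa ha.2.le]

lemma exists_sub_integral_upperSlope_lt (hn : 1 < n) (hh : ContinuousOn h (Ioi 0))
    (hnonpos : ∀ s ≥ (n : ℝ) - 1, h s ≤ 0) (hinf : ∃ δ > 0, ∀ᶠ s in atTop, h s ≤ -δ)
    (hv : ViscSupersolE n h (Ioi 0) v) (hvc : ContinuousOn v (Ioi 0))
    (hbd : BddAbove (u '' Ioi 0)) (hle : ∀ s ≥ (n : ℝ) - 1, h s = 0 → u s ≤ v s)
    (hr : (n : ℝ) - 1 < r) (hlt : v r < u r) :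
    ∃ b > r, (∀ s ∈ Ioo r b, h s < 0) ∧ u b - ∫ s in r..b, upperSlope (n - 1) h s < u r := by
  have hN : 0 < (n : ℝ) - 1 := sub_pos.2 (Nat.one_lt_cast.2 hn)
  set Z : Set ℝ := (Ici ((n : ℝ) - 1) ∩ h ⁻¹' {0}) ∩ Ici r
  have hneg : ∀ s > r, s ∉ Z → h s < 0 := fun s hs hsZ =>
    (hnonpos s (hr.trans hs).le).lt_of_ne fun hzero => hsZ ⟨⟨(hr.trans hs).le, hzero⟩, hs.le⟩
  rcases Z.eq_empty_or_nonempty with hZ | hZ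
  · obtain ⟨M, hM⟩ := hbd
    have htop := tendsto_integral_upperSlope_atTop hN hh hr
      (fun s hs => hnonpos s (hr.le.trans hs)) hinf
    obtain ⟨b, hbint, hb⟩ :=
      ((htop.eventually_gt_atTop (M - u r)).and (eventually_gt_atTop r)).exists
    refine ⟨b, hb, fun s hs => hneg s hs.1 (hZ ▸ notMem_empty s), ?_⟩
    linarith [hM (mem_image_of_mem u (mem_Ioi.2 ((hN.trans hr).trans hb)))]
  · obtain ⟨⟨⟨hz, hz₀⟩, hrz⟩, hmin⟩ := ((isClosed_Ici_inter_zeros hN hh).inter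
      isClosed_Ici).isLeast_csInf hZ ⟨r, fun s hs => hs.2⟩
    set z := sInf Z
    have huz : u z ≤ v z := hle z hz hz₀
    have hrz : r < z := lt_of_le_of_ne hrz fun heq => by rw [← heq] at huz; exact huz.not_gt hlt
    refine ⟨z, hrz, fun s hs => hneg s hs.1 fun hsZ => (hmin hsZ).not_gt hs.2, ?_⟩
    linarith [hv.sub_le_integral_upperSlope hn hh hvc hr hrz.le]

lemma ViscSubsolE.le_of_cast_sub_one_lt (hn : 1 < n) (hh : ContinuousOn h (Ioi 0))
    (hnonpos : ∀ s ≥ (n : ℝ) - 1, h s ≤ 0) (hinf : ∃ δ > 0, ∀ᶠ s in atTop, h s ≤ -δ)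
    (hu : ViscSubsolE n h (Ioi 0) u) (hv : ViscSupersolE n h (Ioi 0) v)
    (huc : ContinuousOn u (Ioi 0)) (hvc : ContinuousOn v (Ioi 0)) (hbd : BddAbove (u '' Ioi 0))
    (hle : ∀ s ≥ (n : ℝ) - 1, h s = 0 → u s ≤ v s) (hr : (n : ℝ) - 1 < r) : u r ≤ v r := by
  by_contra! hlt
  obtain ⟨a, ⟨hNa, har⟩, hnega, hua⟩ :=
    exists_add_integral_lowerSlope_lt hn hh hnonpos hv huc hvc hle hr hlt
  obtain ⟨b, hrb, hnegb, hub⟩ :=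
    exists_sub_integral_upperSlope_lt hn hh hnonpos hinf hv hvc hbd hle hr hlt
  have hnegr : h r < 0 := (hnonpos r hr.le).lt_of_ne fun hzero => (hle r hr.le hzero).not_gt hlt
  have hneg : ∀ s ∈ Ioo a b, h s < 0 := fun s hs => by
    rcases lt_trichotomy s r with hsr | rfl | hrs
    exacts [hnega s ⟨hs.1, hsr⟩, hnegr, hnegb s ⟨hrs, hs.2⟩]
  rcases hu.le_add_integral_or_le_sub_integral hn hh huc hNa hneg ⟨har.le, hrb.le⟩ with h | h
  · exact h.not_gt hua
  · exact h.not_gt hub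

lemma ViscSubsolE.monotoneOn_sub_Ioo (hh : ContinuousOn h (Ioi 0))
    (hu : ViscSubsolE n h (Ioi 0) u) (hv : ViscSupersolE n h (Ioi 0) v)
    (huc : ContinuousOn u (Ioi 0)) (hvc : ContinuousOn v (Ioi 0)) :
    MonotoneOn (u - v) (Ioo 0 ((n : ℝ) - 1)) := by
  intro x hx y hy hxy
  have hN : 0 < (n : ℝ) - 1 := hx.1.trans hx.2
  have hpos : Icc x y ⊆ Ioi 0 := fun s hs => hx.1.trans_le hs.1
  have hq : ContinuousOn (fun s => min (lowerSlope (n - 1) h s) (upperSlope (n - 1) h s))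
      (Icc x y) := by
    refine ContinuousOn.inf ?_ ((continuousOn_upperSlope hN hh).mono hpos)
    exact (continuousOn_lowerSlope hh).mono fun s hs => ⟨hpos hs, (hs.2.trans_lt hy.2).ne⟩
  have hvle := hv.sub_le_integral hvc hx.1 hxy hq fun s hs p hp =>
    (le_hamiltonian_iff_of_lt (hx.1.trans hs.1) (hs.2.trans hy.2)).1 hp
  have hule := integral_le_sub_of_le_isSuperslope hxy (huc.mono hpos) hq fun s hs p hp =>
    (hamiltonian_le_iff_of_lt (hx.1.trans hs.1) (hs.2.trans hy.2)).1
      (hu.hamiltonian_le (hx.1.trans hs.1) hp)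
  simp only [Pi.sub_apply]
  linarith

theorem ViscSubsolE.le_viscSupersolE (hn : 1 < n) (hh : ContinuousOn h (Ioi 0))
    (hnonpos : ∀ s ≥ (n : ℝ) - 1, h s ≤ 0) (hinf : ∃ δ > 0, ∀ᶠ s in atTop, h s ≤ -δ)
    (hu : ViscSubsolE n h (Ioi 0) u) (hv : ViscSupersolE n h (Ioi 0) v)
    (huc : ContinuousOn u (Ici 0)) (hvc : ContinuousOn v (Ici 0)) (hbd : BddAbove (u '' Ioi 0))
    (hle : ∀ s ≥ (n : ℝ) - 1, h s = 0 → u s ≤ v s) : ∀ r ∈ Ici (0 : ℝ), u r ≤ v r := by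
  have hN : 0 < (n : ℝ) - 1 := sub_pos.2 (Nat.one_lt_cast.2 hn)
  have huc' := huc.mono Ioi_subset_Ici_self
  have hvc' := hvc.mono Ioi_subset_Ici_self
  have houter : ∀ r ∈ Ici ((n : ℝ) - 1), u r ≤ v r := by
    have hIci : Ici ((n : ℝ) - 1) ⊆ Ici 0 := Ici_subset_Ici.2 hN.le
    rw [← closure_Ioi] at hIci ⊢
    exact le_on_closure (fun r hr => hu.le_of_cast_sub_one_lt hn hh hnonpos hinf hv huc' hvc' hbd
      hle hr) (huc.mono hIci) (hvc.mono hIci)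
  have hinner : ∀ r ∈ Ioo 0 ((n : ℝ) - 1), u r ≤ v r := fun r hr => by
    have hmono := hu.monotoneOn_sub_Ioo hh hv huc' hvc'
    have hclosure := closure_Ico hr.2.ne
    have hlim := le_on_closure (f := fun _ => (u - v) r) (g := u - v)
      (s := Ico r ((n : ℝ) - 1)) (fun s hs => hmono hr ⟨hr.1.trans_le hs.1, hs.2⟩ hs.1)
      continuousOn_const ((huc'.sub hvc').mono (hclosure ▸ fun s hs => hr.1.trans_le hs.1))
      (hclosure ▸ right_mem_Icc.2 hr.2.le)
    simp only [Pi.sub_apply] at hlim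
    linarith [houter _ self_mem_Ici]
  rw [← closure_Ioi] at huc hvc ⊢
  refine le_on_closure (fun r hr => ?_) huc hvc
  rcases lt_or_ge r ((n : ℝ) - 1) with hrN | hNr
  exacts [hinner r ⟨hr, hrN⟩, houter r hNr]

end Comparison

theorem stmt_8_general {n : ℕ} (hn : 2 ≤ n) {h ψ₁ ψ₂ : ℝ → ℝ} (hh : ContinuousOn h (Ioi 0))
    (hnonpos : ∀ r ≥ (n : ℝ) - 1, h r ≤ 0) (hinf : ∃ δ > 0, ∀ᶠ r in atTop, h r ≤ -δ)
    (hψ₁cont : ContinuousOn ψ₁ (Ici 0)) (hψ₂cont : ContinuousOn ψ₂ (Ici 0))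
    (hψ₁ : ViscSolE n h (Ioi 0) ψ₁) (hψ₂ : ViscSolE n h (Ioi 0) ψ₂)
    (hbd₁ : BddAbove (ψ₁ '' Ioi 0)) (hbd₂ : BddAbove (ψ₂ '' Ioi 0))
    (heq : ∀ r ≥ (n : ℝ) - 1, h r = 0 → ψ₁ r = ψ₂ r) :
    ∀ r ∈ Ici (0 : ℝ), ψ₁ r = ψ₂ r := fun r hr => le_antisymm
  (hψ₁.1.le_viscSupersolE hn hh hnonpos hinf hψ₂.2 hψ₁cont hψ₂cont hbd₁
    (fun s hs hzero => (heq s hs hzero).le) r hr)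
  (hψ₂.1.le_viscSupersolE hn hh hnonpos hinf hψ₁.2 hψ₂cont hψ₁cont hbd₂
    (fun s hs hzero => (heq s hs hzero).ge) r hr)

/-- Two bounded-from-above continuous viscosity solutions of (E) on
`(0,∞)` which agree on the uniqueness set `Ã = {r ≥ n-1 : f̃(r) = c}` agree on `[0,∞)`. -/
theorem stmt_8 (n : ℕ) (hn : 2 ≤ n) (ftilde : ℝ → ℝ)
    (hfC1 : ContDiffOn ℝ 1 ftilde (Set.Ici 0))
    (hfnonneg : ∀ r ∈ Set.Ici (0 : ℝ), 0 ≤ ftilde r)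
    (hfsupp : ∃ R : ℝ, 0 < R ∧ ∀ r ≥ R, ftilde r = 0)
    (c : ℝ) (hc : IsGreatest (ftilde '' Set.Ici ((n : ℝ) - 1)) c) (hcpos : 0 < c)
    (ψ₁ ψ₂ : ℝ → ℝ)
    (hψ₁cont : ContinuousOn ψ₁ (Set.Ici 0)) (hψ₂cont : ContinuousOn ψ₂ (Set.Ici 0))
    (hψ₁ : ViscSolE n (fun r => ftilde r - c) (Set.Ioi 0) ψ₁)
    (hψ₂ : ViscSolE n (fun r => ftilde r - c) (Set.Ioi 0) ψ₂)
    (hbd₁ : BddAbove (ψ₁ '' Set.Ici 0)) (hbd₂ : BddAbove (ψ₂ '' Set.Ici 0))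
    (heq : ∀ r ∈ {r : ℝ | (n : ℝ) - 1 ≤ r ∧ ftilde r = c}, ψ₁ r = ψ₂ r) :
    ∀ r ∈ Set.Ici (0 : ℝ), ψ₁ r = ψ₂ r := by
  obtain ⟨R, -, hR⟩ := hfsupp
  exact stmt_8_general hn ((hfC1.continuousOn.sub continuousOn_const).mono Ioi_subset_Ici_self)
    (fun r hr => sub_nonpos.2 (hc.2 (mem_image_of_mem ftilde hr)))
    ⟨c, hcpos, (eventually_ge_atTop R).mono fun r hr => by simp [hR r hr]⟩
    hψ₁cont hψ₂cont hψ₁ hψ₂ (hbd₁.mono (image_mono Ioi_subset_Ici_self))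
    (hbd₂.mono (image_mono Ioi_subset_Ici_self)) fun r hr hfr => heq r ⟨hr, sub_eq_zero.1 hfr⟩
end
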